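/- Mutual information at low SNR: if σ² = L/(α log L) with 0 < α ≤ 2 fixed, then the single-sample mutual information in the MRA model satisfies I(X; Y) = o(log L), i.e., lim_{L→∞} I(X; Y)/log L = 0. -/

import Mathlib

open MeasureTheory ProbabilityTheory Filter
open scoped ENNReal

namespace MRAformal

/-- Standard Gaussian measure `N(0, I_L)` on `ℝ^L`. -/
noncomputable def stdGaussian (L : ℕ) : Measure (Fin L → ℝ) :=
  Measure.pi fun _ => gaussianReal 0 1

/-- Uniform distribution on `{0, …, L-1}`. -/
noncomputable def unifFin (L : ℕ) : Measure (Fin L) :=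
  ((L : ℝ≥0∞))⁻¹ • Measure.count

/-- Alignment distortion `ρ(x, x̂) = L⁻¹ min_ℓ ‖x - R_ℓ x̂‖²`,
where `(R_ℓ x̂)_j = x̂_{j+ℓ mod L}`. -/
noncomputable def rho (L : ℕ) (x xh : Fin L → ℝ) : ℝ :=
  (L : ℝ)⁻¹ * ⨅ ℓ : Fin L, ∑ j, (x j - xh (j + ℓ)) ^ 2

/-- Base probability space for the MRA model with `n` samples:
the signal `X`, the i.i.d. uniform shifts `ℓ_i`, and the i.i.d. Gaussian noises `Z_i`. -/
noncomputable def mraBase (L n : ℕ) :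
    Measure ((Fin L → ℝ) × (Fin n → Fin L) × (Fin n → Fin L → ℝ)) :=
  (stdGaussian L).prod ((Measure.pi fun _ => unifFin L).prod (Measure.pi fun _ => stdGaussian L))

/-- The measurements `Y_i = R_{ℓ_i} X + σ Z_i`. -/
def mraY (L n : ℕ) (σ : ℝ) (ω : (Fin L → ℝ) × (Fin n → Fin L) × (Fin n → Fin L → ℝ)) :
    Fin n → Fin L → ℝ :=
  fun i j => ω.1 (j + ω.2.1 i) + σ * ω.2.2 i j

/-- `MSE*_MRA(L, σ², n)`: the infimum over measurable estimators `X̂(Y_1,…,Y_n)` of `E ρ(X, X̂)`.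
Here `σ` is the noise standard deviation. -/
noncomputable def MSEstarMRA (L n : ℕ) (σ : ℝ) : ℝ :=
  sInf { e : ℝ | ∃ f : (Fin n → Fin L → ℝ) → (Fin L → ℝ), Measurable f ∧
    e = ∫ ω, rho L ω.1 (f (mraY L n σ ω)) ∂(mraBase L n) }

/-- `n*_MRA(L, σ², ε) = min {n : MSE*_MRA(L, σ², n) ≤ ε}`. -/
noncomputable def nstarMRA (L : ℕ) (σ ε : ℝ) : ℕ :=
  sInf { n : ℕ | MSEstarMRA L n σ ≤ ε }

/-- Noise level such that `σ²(α) = L / (α log L)`. -/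
noncomputable def sigmaAlpha (L : ℕ) (α : ℝ) : ℝ :=
  Real.sqrt ((L : ℝ) / (α * Real.log L))

/-- `n*_MRA(L, α, ε) := n*_MRA(L, σ²(α), ε)`. -/
noncomputable def nstarMRAa (L : ℕ) (α ε : ℝ) : ℕ :=
  nstarMRA L (sigmaAlpha L α) ε

/-- Mutual information `I(U; V)`: the Kullback–Leibler divergence of the joint law with
respect to the product of its marginals (natural logarithm), expressed as the integral of
the log of the Radon–Nikodym derivative. -/
noncomputable def mutualInfo {α β : Type*} [MeasurableSpace α] [MeasurableSpace β]
    (μ : Measure (α × β)) : ℝ :=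
  ∫ p, Real.log ((μ.rnDeriv ((μ.map Prod.fst).prod (μ.map Prod.snd))) p).toReal ∂μ

/-- Joint law of `(X, (Y_1,…,Y_n))` in the MRA model. -/
noncomputable def mraJoint (L n : ℕ) (σ : ℝ) :
    Measure ((Fin L → ℝ) × (Fin n → Fin L → ℝ)) :=
  (mraBase L n).map fun ω => (ω.1, mraY L n σ ω)

/-- Joint law of `(X, Y)` for a single MRA measurement `Y = R_ℓ X + σ Z`. -/
noncomputable def mraJoint1 (L : ℕ) (σ : ℝ) : Measure ((Fin L → ℝ) × (Fin L → ℝ)) :=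
  ((stdGaussian L).prod ((unifFin L).prod (stdGaussian L))).map
    fun ω => (ω.1, fun j => ω.1 (j + ω.2.1) + σ * ω.2.2 j)

/-!
The marginals can be replaced by any product law `N(0, I) ⊗ ν` at the price of increasing the
Kullback–Leibler divergence, so it suffices to compare the law of `(X, Y)` with
`N(0, I) ⊗ N(0, σ² I)`. Given `X`, the law of `σ⁻¹ Y` is the uniform mixture over the shifts `l` of
the translates of `N(0, I)` by `σ⁻¹ R_l X`. With `g_l` their Cameron–Martin densities and `E` the
expectation under the product law, Jensen's inequality bounds the divergence by
`θ⁻¹ log E (L⁻¹ ∑ g_l) ^ (1 + θ)` for `0 < θ ≤ 1`. Up to constants, this moment splits as follows: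

* for `l ≠ k` the correlation `E g_l g_k = E exp (σ⁻² ⟨R_l X, R_k X⟩)` stays bounded, because the
  quadratic form of a shift without fixed points has trace zero and Hilbert–Schmidt norm `√L`,
  which is small compared to `σ²`;
* a diagonal term contributes `L ^ (-θ) E g_l ^ (1 + θ)`, which is of order at most `L ^ (θ ^ 2)`
  since `L / σ² = α log L ≤ 2 log L`.

Hence `I(X; Y) ≤ θ⁻¹ log 5 + θ log L`, and `θ = (log L) ^ (-1 / 2)` gives `I(X; Y) = O(√(log L))`.
-/

open InformationTheory

lemma klDiv_fst_prod_le {α β : Type*} [MeasurableSpace α] [MeasurableSpace β]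
    [StandardBorelSpace β] [Nonempty β] (μ : Measure (α × β)) [IsFiniteMeasure μ]
    (ρ : Measure α) [IsFiniteMeasure ρ] (ν : Measure β) [IsProbabilityMeasure ν] :
    klDiv μ (μ.fst.prod ν) ≤ klDiv μ (ρ.prod ν) := by
  have hchain := klDiv_compProd_eq_add μ.fst ρ μ.condKernel (Kernel.const α ν)
  rw [μ.disintegrate μ.condKernel, Measure.compProd_const, Measure.compProd_const] at hchain
  exact hchain ▸ le_add_self

lemma klDiv_fst_prod_snd_le {α β : Type*} [MeasurableSpace α] [MeasurableSpace β]
    [StandardBorelSpace α] [Nonempty α] [StandardBorelSpace β] [Nonempty β]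
    (μ : Measure (α × β)) [IsProbabilityMeasure μ] (ρ : Measure α) [IsFiniteMeasure ρ]
    (ν : Measure β) [IsProbabilityMeasure ν] :
    klDiv μ (μ.fst.prod μ.snd) ≤ klDiv μ (ρ.prod ν) :=
  calc klDiv μ (μ.fst.prod μ.snd)
      = klDiv ((μ.map Prod.swap).map Prod.swap) ((μ.snd.prod μ.fst).map Prod.swap) := by
        rw [Measure.prod_swap, Measure.map_map measurable_swap measurable_swap,
          Prod.swap_swap_eq, Measure.map_id]
    _ ≤ klDiv (μ.map Prod.swap) ((μ.map Prod.swap).fst.prod μ.fst) := by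
        rw [Measure.fst_map_swap]
        exact klDiv_map_le _ _ measurable_swap
    _ ≤ klDiv (μ.map Prod.swap) (ν.prod μ.fst) := klDiv_fst_prod_le _ _ _
    _ = klDiv (μ.map Prod.swap) ((μ.fst.prod ν).map Prod.swap) := by rw [Measure.prod_swap]
    _ ≤ klDiv μ (μ.fst.prod ν) := klDiv_map_le _ _ measurable_swap
    _ ≤ klDiv μ (ρ.prod ν) := klDiv_fst_prod_le μ ρ ν

lemma klFun_le_rpow {θ c u : ℝ} (hθ : 0 < θ) (hc : 0 < c) (hu : 0 ≤ u) :
    klFun u ≤ θ⁻¹ * (u ^ (1 + θ) / c - u + u * Real.log c) + 1 - u := by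
  rcases hu.eq_or_lt with rfl | hu
  · simp [klFun_zero, Real.zero_rpow (by positivity : 1 + θ ≠ 0)]
  have hlog : θ * Real.log u ≤ u ^ θ / c - 1 + Real.log c := by
    have h := Real.log_le_sub_one_of_pos (x := u ^ θ / c) (by positivity)
    rw [Real.log_div (by positivity) hc.ne', Real.log_rpow hu] at h
    linarith
  have hmul : u * Real.log u ≤ θ⁻¹ * (u ^ (1 + θ) / c - u + u * Real.log c) := by
    rw [le_inv_mul_iff₀ hθ, Real.rpow_one_add' hu.le (by positivity)]
    calc θ * (u * Real.log u) = u * (θ * Real.log u) := by ring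
      _ ≤ u * (u ^ θ / c - 1 + Real.log c) := by gcongr
      _ = u * u ^ θ / c - u + u * Real.log c := by ring
  rw [klFun_apply]
  linarith

lemma lintegral_klFun_le {Ω : Type*} [MeasurableSpace Ω] {ν : Measure Ω}
    [IsProbabilityMeasure ν] {u : Ω → ℝ} {θ c : ℝ} (hθ : 0 < θ) (hc : 0 < c) (hu0 : 0 ≤ u)
    (hint : Integrable u ν) (hu1 : ∫ x, u x ∂ν = 1)
    (hpow : Integrable (fun x => u x ^ (1 + θ)) ν) (hle : ∫ x, u x ^ (1 + θ) ∂ν ≤ c) :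
    ∫⁻ x, ENNReal.ofReal (klFun (u x)) ∂ν ≤ ENNReal.ofReal (θ⁻¹ * Real.log c) := by
  set g : Ω → ℝ := fun x => θ⁻¹ * (u x ^ (1 + θ) / c - u x + u x * Real.log c) + 1 - u x
  have hkg : ∀ x, klFun (u x) ≤ g x := fun x => klFun_le_rpow hθ hc (hu0 x)
  have hg : Integrable g ν := by fun_prop
  have hg_eq : ∫ x, g x ∂ν = θ⁻¹ * ((∫ x, u x ^ (1 + θ) ∂ν) / c - 1 + Real.log c) := by
    rw [integral_sub (by fun_prop) hint, integral_add (by fun_prop) (by fun_prop),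
      integral_const_mul, integral_add (by fun_prop) (by fun_prop),
      integral_sub (by fun_prop) hint, integral_div, integral_mul_const, hu1]
    simp
  calc ∫⁻ x, ENNReal.ofReal (klFun (u x)) ∂ν
      ≤ ∫⁻ x, ENNReal.ofReal (g x) ∂ν := by
        gcongr with x
        exact hkg x
    _ = ENNReal.ofReal (∫ x, g x ∂ν) := (ofReal_integral_eq_lintegral_ofReal hg
        (ae_of_all _ fun x => (klFun_nonneg (hu0 x)).trans (hkg x))).symm
    _ ≤ ENNReal.ofReal (θ⁻¹ * Real.log c) := by
        rw [hg_eq]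
        gcongr
        linarith [(div_le_one hc).2 hle]

lemma klDiv_le_of_lintegral_rnDeriv_rpow_le {Ω : Type*} [MeasurableSpace Ω] {μ ν : Measure Ω}
    [IsProbabilityMeasure μ] [IsProbabilityMeasure ν] (hμν : μ ≪ ν) {θ c : ℝ} (hθ : 0 < θ)
    (hc : 0 < c) (h : ∫⁻ x, μ.rnDeriv ν x ^ (1 + θ) ∂ν ≤ ENNReal.ofReal c) :
    klDiv μ ν ≤ ENNReal.ofReal (θ⁻¹ * Real.log c) := by
  have hmeas : AEMeasurable (fun x => μ.rnDeriv ν x ^ (1 + θ)) ν := by fun_prop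
  have hfin : ∫⁻ x, μ.rnDeriv ν x ^ (1 + θ) ∂ν ≠ ∞ := (h.trans_lt ENNReal.ofReal_lt_top).ne
  rw [klDiv_eq_lintegral_klFun_of_ac hμν]
  refine lintegral_klFun_le hθ hc (fun x => ENNReal.toReal_nonneg)
    Measure.integrable_toReal_rnDeriv (by simp [Measure.integral_toReal_rnDeriv hμν]) ?_ ?_
  · simpa only [ENNReal.toReal_rpow] using integrable_toReal_of_lintegral_ne_top hmeas hfin
  · simp only [ENNReal.toReal_rpow]
    rw [integral_toReal hmeas (ae_lt_top' hmeas hfin)]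
    exact ENNReal.toReal_le_of_le_ofReal hc.le h

lemma rpow_le_one_add {x : ℝ≥0∞} {θ : ℝ} (h0 : 0 ≤ θ) (h1 : θ ≤ 1) : x ^ θ ≤ 1 + x := by
  rcases le_total x 1 with hx | hx
  · exact (ENNReal.rpow_le_one hx h0).trans le_self_add
  · exact ((ENNReal.rpow_le_rpow_of_exponent_le hx h1).trans_eq (ENNReal.rpow_one x)).trans
      le_add_self

lemma sum_rpow_one_add_le {ι : Type*} [DecidableEq ι] (s : Finset ι) (v : ι → ℝ≥0∞) {θ : ℝ}
    (h0 : 0 ≤ θ) (h1 : θ ≤ 1) :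
    (∑ l ∈ s, v l) ^ (1 + θ) ≤
      ∑ l ∈ s, (v l ^ (1 + θ) + v l + ∑ k ∈ s.erase l, v l * v k) := by
  rw [ENNReal.rpow_add_of_nonneg _ _ zero_le_one h0, ENNReal.rpow_one, Finset.sum_mul]
  refine Finset.sum_le_sum fun l hl => ?_
  calc v l * (∑ k ∈ s, v k) ^ θ
      = v l * (v l + ∑ k ∈ s.erase l, v k) ^ θ := by rw [Finset.add_sum_erase s v hl]
    _ ≤ v l * (v l ^ θ + (1 + ∑ k ∈ s.erase l, v k)) := by
        gcongr
        exact (ENNReal.rpow_add_le_add_rpow _ _ h0 h1).trans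
          (add_le_add_right (rpow_le_one_add h0 h1) _)
    _ = v l ^ (1 + θ) + v l + ∑ k ∈ s.erase l, v l * v k := by
        rw [ENNReal.rpow_add_of_nonneg _ _ zero_le_one h0, ENNReal.rpow_one, ← Finset.mul_sum]
        ring

lemma lintegral_sum_rpow_one_add_le {ι Ω : Type*} [DecidableEq ι] [MeasurableSpace Ω]
    {ν : Measure Ω} (s : Finset ι) {g : ι → Ω → ℝ≥0∞} (hg : ∀ l, Measurable (g l)) {θ : ℝ}
    (h0 : 0 ≤ θ) (h1 : θ ≤ 1) :
    ∫⁻ x, (∑ l ∈ s, g l x) ^ (1 + θ) ∂ν ≤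
      ∑ l ∈ s, (∫⁻ x, g l x ^ (1 + θ) ∂ν + ∫⁻ x, g l x ∂ν
        + ∑ k ∈ s.erase l, ∫⁻ x, g l x * g k x ∂ν) := by
  refine (lintegral_mono fun x => sum_rpow_one_add_le s (g · x) h0 h1).trans_eq ?_
  rw [lintegral_finsetSum _ (by fun_prop)]
  refine Finset.sum_congr rfl fun l _ => ?_
  rw [lintegral_add_left (by fun_prop), lintegral_add_left (by fun_prop),
    lintegral_finsetSum _ (by fun_prop)]

lemma lintegral_average_rpow_one_add_le {ι Ω : Type*} [Fintype ι] [Nonempty ι]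
    [MeasurableSpace Ω] {ν : Measure Ω} {g : ι → Ω → ℝ≥0∞} (hg : ∀ l, Measurable (g l)) {θ : ℝ}
    {a b : ℝ≥0∞} (h0 : 0 ≤ θ) (h1 : θ ≤ 1) (hone : ∀ l, ∫⁻ x, g l x ∂ν = 1)
    (hself : ∀ l, ∫⁻ x, g l x ^ (1 + θ) ∂ν ≤ b)
    (hcross : ∀ l k, l ≠ k → ∫⁻ x, g l x * g k x ∂ν ≤ a) :
    ∫⁻ x, (∑ l, (Fintype.card ι : ℝ≥0∞)⁻¹ * g l x) ^ (1 + θ) ∂ν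
      ≤ (Fintype.card ι : ℝ≥0∞)⁻¹ ^ θ * b + 1 + a := by
  classical
  set w : ℝ≥0∞ := (Fintype.card ι : ℝ≥0∞)⁻¹
  have hcard (x : ℝ≥0∞) : ∑ _l : ι, w * x = x := by
    rw [Finset.sum_const, Finset.card_univ, nsmul_eq_mul, ← mul_assoc,
      ENNReal.mul_inv_cancel (by simp) (by simp), one_mul]
  have hself' (l : ι) : ∫⁻ x, (w * g l x) ^ (1 + θ) ∂ν ≤ w * (w ^ θ * b) := by
    simp only [ENNReal.mul_rpow_of_nonneg _ _ (by positivity : 0 ≤ 1 + θ)]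
    rw [lintegral_const_mul _ (by fun_prop), ENNReal.rpow_add_of_nonneg _ _ zero_le_one h0,
      ENNReal.rpow_one, mul_assoc]
    exact mul_le_mul_right (mul_le_mul_right (hself l) _) _
  have hcross' (l : ι) : ∑ k ∈ Finset.univ.erase l, ∫⁻ x, w * g l x * (w * g k x) ∂ν ≤ w * a :=
    calc ∑ k ∈ Finset.univ.erase l, ∫⁻ x, w * g l x * (w * g k x) ∂ν
        ≤ ∑ _k ∈ Finset.univ.erase l, w * (w * a) := by
          refine Finset.sum_le_sum fun k hk => ?_
          rw [lintegral_congr fun x => mul_mul_mul_comm w (g l x) w (g k x),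
            lintegral_const_mul _ (by fun_prop), mul_assoc]
          gcongr
          exact hcross l k (Finset.ne_of_mem_erase hk).symm
      _ ≤ ∑ _k : ι, w * (w * a) := Finset.sum_le_sum_of_subset (Finset.erase_subset _ _)
      _ = w * a := hcard _
  calc ∫⁻ x, (∑ l, w * g l x) ^ (1 + θ) ∂ν
      ≤ ∑ l, (∫⁻ x, (w * g l x) ^ (1 + θ) ∂ν + ∫⁻ x, w * g l x ∂ν
          + ∑ k ∈ Finset.univ.erase l, ∫⁻ x, w * g l x * (w * g k x) ∂ν) :=
        lintegral_sum_rpow_one_add_le _ (by fun_prop) h0 h1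
    _ ≤ ∑ _l : ι, w * (w ^ θ * b + 1 + a) := by
        refine Finset.sum_le_sum fun l _ => ?_
        rw [lintegral_const_mul _ (hg l), hone, mul_add, mul_add]
        exact add_le_add (add_le_add (hself' l) le_rfl) (hcross' l)
    _ = w ^ θ * b + 1 + a := hcard _

section ProductMeasure

variable {ι : Type*} [Fintype ι] {Ω : ι → Type*} [∀ i, MeasurableSpace (Ω i)]
  (μ : ∀ i, Measure (Ω i)) [∀ i, IsProbabilityMeasure (μ i)] {f : ∀ i, Ω i → ℝ≥0∞}

lemma lintegral_pi_prod (hf : ∀ i, Measurable (f i)) :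
    ∫⁻ x, ∏ i, f i (x i) ∂Measure.pi μ = ∏ i, ∫⁻ y, f i y ∂μ i := by
  have hindep : iIndepFun (fun i (x : ∀ i, Ω i) => f i (x i)) (Measure.pi μ) :=
    iIndepFun_pi (X := f) fun i => (hf i).aemeasurable
  rw [lintegral_prod_eq_prod_lintegral_of_indepFun Finset.univ _ hindep fun i => by fun_prop]
  exact Finset.prod_congr rfl fun i _ => (measurePreserving_eval μ i).lintegral_comp (hf i)

lemma pi_withDensity (hf : ∀ i, Measurable (f i))
    [∀ i, SigmaFinite ((μ i).withDensity (f i))] :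
    Measure.pi (fun i => (μ i).withDensity (f i))
      = (Measure.pi μ).withDensity fun x => ∏ i, f i (x i) := by
  classical
  refine Measure.pi_eq fun S hS => ?_
  have hind (x : ∀ i, Ω i) : (Set.univ.pi S).indicator (fun x => ∏ i, f i (x i)) x
      = ∏ i, (S i).indicator (f i) (x i) := by
    simp only [Set.indicator_apply, Set.mem_univ_pi, Finset.prod_ite_zero, Finset.mem_univ,
      true_implies]
  rw [withDensity_apply _ (MeasurableSet.univ_pi hS),
    ← lintegral_indicator (MeasurableSet.univ_pi hS), lintegral_congr hind,
    lintegral_pi_prod μ fun i => (hf i).indicator (hS i)]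
  exact Finset.prod_congr rfl fun i _ => by
    rw [lintegral_indicator (hS i), withDensity_apply _ (hS i)]

end ProductMeasure

section Gaussian

variable {ι : Type*} [Fintype ι]

/-- The standard Gaussian measure on `ι → ℝ`. It unfolds to `stdGaussian L` when `ι` is
`Fin L`. -/
noncomputable abbrev gaussianPi (ι : Type*) [Fintype ι] : Measure (ι → ℝ) :=
  Measure.pi fun _ => gaussianReal 0 1

lemma lintegral_exp_sum_gaussianPi {f : ι → ℝ → ℝ} (hf : ∀ i, Measurable (f i)) :
    ∫⁻ x, ENNReal.ofReal (Real.exp (∑ i, f i (x i))) ∂gaussianPi ι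
      = ∏ i, ∫⁻ y, ENNReal.ofReal (Real.exp (f i y)) ∂gaussianReal 0 1 := by
  simp_rw [Real.exp_sum, ENNReal.ofReal_prod_of_nonneg fun _ _ => (Real.exp_pos _).le]
  exact lintegral_pi_prod _ (f := fun i y => ENNReal.ofReal (Real.exp (f i y))) (by fun_prop)

lemma lintegral_exp_mul_gaussianReal (t : ℝ) :
    ∫⁻ y, ENNReal.ofReal (Real.exp (t * y)) ∂gaussianReal 0 1
      = ENNReal.ofReal (Real.exp (t ^ 2 / 2)) := by
  rw [← ofReal_integral_eq_lintegral_ofReal (integrable_exp_mul_gaussianReal t)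
    (ae_of_all _ fun x => (Real.exp_pos _).le)]
  have h := congrFun (mgf_fun_id_gaussianReal (μ := 0) (v := 1)) t
  simp only [mgf] at h
  simp [h]

lemma lintegral_exp_dotProduct_gaussianPi (a : ι → ℝ) :
    ∫⁻ z, ENNReal.ofReal (Real.exp (a ⬝ᵥ z)) ∂gaussianPi ι
      = ENNReal.ofReal (Real.exp ((a ⬝ᵥ a) / 2)) := by
  simp only [dotProduct]
  rw [lintegral_exp_sum_gaussianPi fun i => by fun_prop]
  simp_rw [lintegral_exp_mul_gaussianReal]
  rw [← ENNReal.ofReal_prod_of_nonneg fun _ _ => (Real.exp_pos _).le, ← Real.exp_sum,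
    Finset.sum_div]
  simp only [sq]

/-- The Cameron–Martin density of the translate by `m` of the standard Gaussian measure, relative
to the standard Gaussian measure. -/
noncomputable def cameronMartin (m z : ι → ℝ) : ℝ≥0∞ :=
  ENNReal.ofReal (Real.exp (m ⬝ᵥ z - (m ⬝ᵥ m) / 2))

@[fun_prop]
lemma measurable_dotProduct {α : Type*} [MeasurableSpace α] {f g : α → ι → ℝ}
    (hf : Measurable f) (hg : Measurable g) : Measurable fun x => f x ⬝ᵥ g x := by
  unfold dotProduct
  fun_prop

@[fun_prop]
lemma measurable_cameronMartin {α : Type*} [MeasurableSpace α] {f g : α → ι → ℝ}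
    (hf : Measurable f) (hg : Measurable g) : Measurable fun x => cameronMartin (f x) (g x) := by
  unfold cameronMartin
  fun_prop

lemma gaussianReal_eq_withDensity (m : ℝ) :
    gaussianReal m 1 = (gaussianReal 0 1).withDensity
      fun y => ENNReal.ofReal (Real.exp (m * y - m * m / 2)) := by
  rw [gaussianReal_of_var_ne_zero _ one_ne_zero, gaussianReal_of_var_ne_zero _ one_ne_zero,
    ← withDensity_mul _ (measurable_gaussianPDF _ _) (by fun_prop)]
  congr 1
  ext y
  rw [Pi.mul_apply, gaussianPDF, gaussianPDF, ← ENNReal.ofReal_mul (gaussianPDFReal_nonneg _ _ _),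
    gaussianPDFReal, gaussianPDFReal, mul_assoc _ (Real.exp _), ← Real.exp_add]
  congr 3
  push_cast
  ring

lemma map_const_add_gaussianPi (m : ι → ℝ) :
    (gaussianPi ι).map (m + ·) = (gaussianPi ι).withDensity (cameronMartin m) := by
  have hdens (i : ι) : (gaussianReal 0 1).map (m i + ·) = (gaussianReal 0 1).withDensity
      fun y => ENNReal.ofReal (Real.exp (m i * y - m i * m i / 2)) := by
    rw [gaussianReal_map_const_add, zero_add, gaussianReal_eq_withDensity]
  have (i : ι) : IsProbabilityMeasure ((gaussianReal 0 1).withDensity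
      fun y => ENNReal.ofReal (Real.exp (m i * y - m i * m i / 2))) := by
    rw [← gaussianReal_eq_withDensity]
    infer_instance
  calc (gaussianPi ι).map (m + ·)
      = Measure.pi fun i => (gaussianReal 0 1).map (m i + ·) :=
        Measure.pi_map_pi (f := fun i z => m i + z) (by fun_prop)
    _ = (gaussianPi ι).withDensity fun z =>
          ∏ i, ENNReal.ofReal (Real.exp (m i * z i - m i * m i / 2)) := by
        simp_rw [hdens]
        exact pi_withDensity _ (by fun_prop)
    _ = (gaussianPi ι).withDensity (cameronMartin m) := by
        congr 1
        ext z
        rw [cameronMartin, dotProduct, dotProduct, Finset.sum_div, ← Finset.sum_sub_distrib,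
          Real.exp_sum, ENNReal.ofReal_prod_of_nonneg fun _ _ => (Real.exp_pos _).le]

lemma lintegral_const_add_gaussianPi (m : ι → ℝ) {F : (ι → ℝ) → ℝ≥0∞} (hF : Measurable F) :
    ∫⁻ z, F (m + z) ∂gaussianPi ι = ∫⁻ z, cameronMartin m z * F z ∂gaussianPi ι := by
  rw [← lintegral_map hF (by fun_prop), map_const_add_gaussianPi,
    lintegral_withDensity_eq_lintegral_mul _ (by fun_prop) hF]
  rfl

lemma lintegral_cameronMartin (m : ι → ℝ) : ∫⁻ z, cameronMartin m z ∂gaussianPi ι = 1 := by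
  simpa using (lintegral_const_add_gaussianPi m (F := 1) measurable_const).symm

lemma lintegral_exp_dotProduct_sub_gaussianPi (a : ι → ℝ) (b : ℝ) :
    ∫⁻ z, ENNReal.ofReal (Real.exp (a ⬝ᵥ z - b)) ∂gaussianPi ι
      = ENNReal.ofReal (Real.exp ((a ⬝ᵥ a) / 2 - b)) := by
  simp_rw [sub_eq_add_neg, Real.exp_add, ENNReal.ofReal_mul (Real.exp_pos _).le]
  rw [lintegral_mul_const _ (by fun_prop), lintegral_exp_dotProduct_gaussianPi]

lemma lintegral_cameronMartin_mul (m m' : ι → ℝ) :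
    ∫⁻ z, cameronMartin m z * cameronMartin m' z ∂gaussianPi ι
      = ENNReal.ofReal (Real.exp (m ⬝ᵥ m')) := by
  have hprod (z : ι → ℝ) : cameronMartin m z * cameronMartin m' z = ENNReal.ofReal
      (Real.exp ((m + m') ⬝ᵥ z - (m ⬝ᵥ m + m' ⬝ᵥ m') / 2)) := by
    rw [cameronMartin, cameronMartin, ← ENNReal.ofReal_mul (Real.exp_pos _).le, ← Real.exp_add,
      add_dotProduct]
    ring_nf
  rw [lintegral_congr hprod, lintegral_exp_dotProduct_sub_gaussianPi, add_dotProduct,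
    dotProduct_add, dotProduct_add, dotProduct_comm m' m]
  ring_nf

lemma lintegral_cameronMartin_rpow (m : ι → ℝ) {p : ℝ} (hp : 0 ≤ p) :
    ∫⁻ z, cameronMartin m z ^ p ∂gaussianPi ι
      = ENNReal.ofReal (Real.exp ((p ^ 2 - p) / 2 * (m ⬝ᵥ m))) := by
  have hpow (z : ι → ℝ) : cameronMartin m z ^ p = ENNReal.ofReal
      (Real.exp ((p • m) ⬝ᵥ z - p * (m ⬝ᵥ m) / 2)) := by
    rw [cameronMartin, ENNReal.ofReal_rpow_of_nonneg (Real.exp_pos _).le hp, ← Real.exp_mul,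
      smul_dotProduct, smul_eq_mul]
    ring_nf
  rw [lintegral_congr hpow, lintegral_exp_dotProduct_sub_gaussianPi, smul_dotProduct,
    dotProduct_smul, smul_eq_mul, smul_eq_mul]
  ring_nf

end Gaussian

section QuadraticForm

variable {ι : Type*} [Fintype ι]

lemma inv_one_sub_le_exp {l : ℝ} (hl : l ≤ 1 / 2) : (1 - l)⁻¹ ≤ Real.exp (l + l ^ 2) := by
  rw [inv_le_iff_one_le_mul₀ (by linarith)]
  rcases le_or_gt 0 l with hl0 | hl0
  · have hexp := Real.quadratic_le_exp_of_nonneg (x := l + l ^ 2) (by positivity)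
    have hcube : 0 ≤ l ^ 2 * (1 / 2 - l) := mul_nonneg (sq_nonneg l) (by linarith)
    nlinarith [mul_nonneg hcube hl0, mul_nonneg (mul_nonneg hcube hl0) hl0]
  · have hexp := Real.add_one_le_exp (l + l ^ 2)
    nlinarith [pow_pos (neg_pos.2 hl0) 3]

lemma lintegral_exp_sq_gaussianReal {l : ℝ} (hl : l < 1) :
    ∫⁻ x, ENNReal.ofReal (Real.exp (l * x ^ 2 / 2)) ∂gaussianReal 0 1
      = ENNReal.ofReal √(1 - l)⁻¹ := by
  have hpos : 0 < 1 - l := by linarith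
  have hdens (x : ℝ) : gaussianPDF 0 1 x * ENNReal.ofReal (Real.exp (l * x ^ 2 / 2))
      = ENNReal.ofReal ((√(2 * Real.pi))⁻¹ * Real.exp (-((1 - l) / 2) * x ^ 2)) := by
    rw [gaussianPDF, gaussianPDFReal, ← ENNReal.ofReal_mul (by positivity), mul_assoc,
      ← Real.exp_add]
    push_cast
    ring_nf
  rw [gaussianReal_of_var_ne_zero 0 one_ne_zero,
    lintegral_withDensity_eq_lintegral_mul _ (measurable_gaussianPDF 0 1) (by fun_prop)]
  simp only [Pi.mul_apply]
  rw [lintegral_congr hdens, ← ofReal_integral_eq_lintegral_ofReal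
    ((integrable_exp_neg_mul_sq (by linarith)).const_mul _) (ae_of_all _ fun x => by positivity),
    integral_const_mul, integral_gaussian, ← Real.sqrt_inv, ← Real.sqrt_mul (by positivity)]
  congr 2
  field_simp

lemma lintegral_exp_sq_gaussianReal_le {l : ℝ} (hl : l ≤ 1 / 2) :
    ∫⁻ x, ENNReal.ofReal (Real.exp (l * x ^ 2 / 2)) ∂gaussianReal 0 1
      ≤ ENNReal.ofReal (Real.exp ((l + l ^ 2) / 2)) := by
  rw [lintegral_exp_sq_gaussianReal (by linarith), Real.exp_half]
  gcongr
  exact inv_one_sub_le_exp hl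

lemma map_sum_smul_gaussianPi (b : OrthonormalBasis ι ℝ (EuclideanSpace ℝ ι)) :
    (gaussianPi ι).map (fun x => (∑ i, x i • b i).ofLp) = gaussianPi ι := by
  have h := congrArg (Measure.map (WithLp.ofLp (p := 2) (V := ι → ℝ)))
    ((stdGaussian_eq_map_pi_orthonormalBasis b).symm.trans map_pi_eq_stdGaussian.symm)
  rw [Measure.map_map (by fun_prop) (by fun_prop), Measure.map_map (by fun_prop) (by fun_prop)] at h
  exact h.trans Measure.map_id

open scoped Matrix

variable {B : Matrix ι ι ℝ}

lemma sum_smul_eigenvectorBasis_dotProduct_mulVec [DecidableEq ι] (hB : B.IsHermitian)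
    (x : ι → ℝ) :
    (∑ i, x i • hB.eigenvectorBasis i).ofLp ⬝ᵥ B *ᵥ (∑ i, x i • hB.eigenvectorBasis i).ofLp
      = ∑ i, hB.eigenvalues i * x i ^ 2 := by
  set v := ∑ i, x i • hB.eigenvectorBasis i with hv
  have hBv : B *ᵥ v.ofLp = (∑ i, (hB.eigenvalues i * x i) • hB.eigenvectorBasis i).ofLp := by
    simp only [hv, WithLp.ofLp_sum, WithLp.ofLp_smul, Matrix.mulVec_sum, Matrix.mulVec_smul,
      hB.mulVec_eigenvectorBasis, smul_smul, mul_comm]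
  calc v.ofLp ⬝ᵥ B *ᵥ v.ofLp
      = inner ℝ (∑ i, (hB.eigenvalues i * x i) • hB.eigenvectorBasis i) v := by
        rw [hBv, EuclideanSpace.inner_eq_star_dotProduct, star_trivial]
    _ = ∑ i, hB.eigenvalues i * x i ^ 2 := by
        rw [hv, hB.eigenvectorBasis.orthonormal.inner_sum]
        simp only [conj_trivial, mul_assoc, sq]

lemma trace_mul_self_eq_sum_eigenvalues_sq [DecidableEq ι] (hB : B.IsHermitian) :
    (B * B).trace = ∑ i, hB.eigenvalues i ^ 2 := by
  conv_lhs => rw [hB.spectral_theorem]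
  rw [← map_mul, Unitary.conjStarAlgAut_apply, Matrix.trace_mul_comm, ← mul_assoc]
  simp [Matrix.diagonal_mul_diagonal, Matrix.trace_diagonal, pow_two]

lemma lintegral_exp_quadratic_gaussianPi_le (hB : B.IsHermitian)
    (htr : (B * B).trace ≤ 1 / 4) :
    ∫⁻ x, ENNReal.ofReal (Real.exp ((x ⬝ᵥ B *ᵥ x) / 2)) ∂gaussianPi ι
      ≤ ENNReal.ofReal (Real.exp ((B.trace + (B * B).trace) / 2)) := by
  classical
  have heig (i : ι) : hB.eigenvalues i ≤ 1 / 2 := by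
    refine le_of_abs_le (abs_le_of_sq_le_sq ?_ (by norm_num))
    calc hB.eigenvalues i ^ 2 ≤ ∑ i, hB.eigenvalues i ^ 2 :=
          Finset.single_le_sum (f := fun i => hB.eigenvalues i ^ 2) (fun _ _ => sq_nonneg _)
            (Finset.mem_univ i)
      _ ≤ (1 / 2) ^ 2 := by
          rw [← trace_mul_self_eq_sum_eigenvalues_sq]
          linarith
  have hmeas : Measurable fun x : ι → ℝ => B *ᵥ x :=
    (continuous_const.matrix_mulVec continuous_id).measurable
  calc ∫⁻ x, ENNReal.ofReal (Real.exp ((x ⬝ᵥ B *ᵥ x) / 2)) ∂gaussianPi ι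
      = ∫⁻ x, ENNReal.ofReal (Real.exp (∑ i, hB.eigenvalues i * x i ^ 2 / 2)) ∂gaussianPi ι := by
        rw [← map_sum_smul_gaussianPi hB.eigenvectorBasis,
          lintegral_map (by fun_prop) (by fun_prop), map_sum_smul_gaussianPi]
        simp_rw [sum_smul_eigenvectorBasis_dotProduct_mulVec, Finset.sum_div]
    _ = ∏ i, ∫⁻ y, ENNReal.ofReal (Real.exp (hB.eigenvalues i * y ^ 2 / 2))
          ∂gaussianReal 0 1 :=
        lintegral_exp_sum_gaussianPi (f := fun i y => hB.eigenvalues i * y ^ 2 / 2) (by fun_prop)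
    _ ≤ ∏ i, ENNReal.ofReal
          (Real.exp ((hB.eigenvalues i + hB.eigenvalues i ^ 2) / 2)) :=
        Finset.prod_le_prod' fun i _ => lintegral_exp_sq_gaussianReal_le (heig i)
    _ = ENNReal.ofReal (Real.exp ((B.trace + (B * B).trace) / 2)) := by
        rw [← ENNReal.ofReal_prod_of_nonneg fun _ _ => (Real.exp_pos _).le, ← Real.exp_sum,
          ← Finset.sum_div, Finset.sum_add_distrib, trace_mul_self_eq_sum_eigenvalues_sq hB,
          hB.trace_eq_sum_eigenvalues]
        rfl

lemma trace_permMatrix_le_card [DecidableEq ι] (π : Equiv.Perm ι) :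
    (π.permMatrix ℝ).trace ≤ Fintype.card ι := by
  rw [Matrix.trace_permutation, ← Nat.card_eq_fintype_card]
  exact_mod_cast Set.ncard_le_card _

lemma trace_permMatrix_add_transpose_sq_le [DecidableEq ι] (π : Equiv.Perm ι) :
    ((π.permMatrix ℝ + (π.permMatrix ℝ)ᵀ) * (π.permMatrix ℝ + (π.permMatrix ℝ)ᵀ)).trace
      ≤ 4 * Fintype.card ι := by
  simp only [Matrix.transpose_permMatrix, mul_add, add_mul, ← Matrix.permMatrix_mul,
    Matrix.trace_add]
  linarith [trace_permMatrix_le_card (π * π), trace_permMatrix_le_card (π * π⁻¹),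
    trace_permMatrix_le_card (π⁻¹ * π), trace_permMatrix_le_card (π⁻¹ * π⁻¹)]

lemma lintegral_exp_sum_mul_perm_gaussianPi_le (π : Equiv.Perm ι) {t : ℝ}
    (ht : 16 * t ^ 2 * Fintype.card ι ≤ 1) :
    ∫⁻ x, ENNReal.ofReal (Real.exp (t * ∑ i, x i * x (π i))) ∂gaussianPi ι
      ≤ ENNReal.ofReal (Real.exp
        (t * (Function.fixedPoints π).ncard + 2 * t ^ 2 * Fintype.card ι)) := by
  classical
  set P : Matrix ι ι ℝ := π.permMatrix ℝ
  set B : Matrix ι ι ℝ := t • (P + Pᵀ) with hBdef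
  have hB : B.IsHermitian := by
    rw [Matrix.IsHermitian, Matrix.conjTranspose_eq_transpose_of_trivial, hBdef,
      Matrix.transpose_smul, Matrix.transpose_add, Matrix.transpose_transpose, add_comm]
  have hquad (x : ι → ℝ) : (x ⬝ᵥ B *ᵥ x) / 2 = t * ∑ i, x i * x (π i) := by
    have hP : x ⬝ᵥ P *ᵥ x = ∑ i, x i * x (π i) := by
      rw [Matrix.permMatrix_mulVec]
      rfl
    rw [hBdef, Matrix.smul_mulVec, dotProduct_smul, Matrix.add_mulVec, dotProduct_add,
      Matrix.mulVec_transpose, dotProduct_comm x (x ᵥ* P), ← Matrix.dotProduct_mulVec, hP,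
      smul_eq_mul]
    ring
  have htr : B.trace = 2 * t * (Function.fixedPoints π).ncard := by
    rw [hBdef, Matrix.trace_smul, Matrix.trace_add, Matrix.trace_transpose,
      Matrix.trace_permutation, smul_eq_mul]
    ring
  have htr_sq : (B * B).trace ≤ 4 * t ^ 2 * Fintype.card ι := by
    rw [hBdef, Matrix.smul_mul, Matrix.mul_smul, Matrix.trace_smul, Matrix.trace_smul, smul_eq_mul,
      smul_eq_mul]
    nlinarith [mul_le_mul_of_nonneg_left (trace_permMatrix_add_transpose_sq_le π) (sq_nonneg t)]
  refine (lintegral_congr fun x => by rw [← hquad]).trans_le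
    ((lintegral_exp_quadratic_gaussianPi_le hB (by linarith)).trans ?_)
  gcongr
  linarith

end QuadraticForm

section MRA

lemma mutualInfo_eq_toReal_klDiv {α β : Type*} [MeasurableSpace α] [MeasurableSpace β]
    {μ : Measure (α × β)} [IsProbabilityMeasure μ] (h : μ ≪ μ.fst.prod μ.snd) :
    mutualInfo μ = (klDiv μ (μ.fst.prod μ.snd)).toReal :=
  (toReal_klDiv_of_measure_eq h (by simp)).symm

lemma mutualInfo_mem_Icc {α β : Type*} [MeasurableSpace α] [MeasurableSpace β]
    [StandardBorelSpace α] [Nonempty α] [StandardBorelSpace β] [Nonempty β]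
    {μ : Measure (α × β)} [IsProbabilityMeasure μ] {ρ : Measure α} [IsFiniteMeasure ρ]
    {ν : Measure β} [IsProbabilityMeasure ν] {c : ℝ} (hc : 0 ≤ c)
    (h : klDiv μ (ρ.prod ν) ≤ ENNReal.ofReal c) : mutualInfo μ ∈ Set.Icc 0 c := by
  have hle : klDiv μ (μ.fst.prod μ.snd) ≤ ENNReal.ofReal c := (klDiv_fst_prod_snd_le μ ρ ν).trans h
  have hac := (klDiv_ne_top_iff.1 (hle.trans_lt ENNReal.ofReal_lt_top).ne).1
  rw [mutualInfo_eq_toReal_klDiv hac]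
  exact ⟨ENNReal.toReal_nonneg, ENNReal.toReal_le_of_le_ofReal hc hle⟩

variable {L : ℕ}

lemma lintegral_unifFin (f : Fin L → ℝ≥0∞) :
    ∫⁻ l, f l ∂unifFin L = ∑ l, (L : ℝ≥0∞)⁻¹ * f l := by
  rw [unifFin, lintegral_smul_measure, lintegral_count, tsum_fintype, smul_eq_mul,
    Finset.mul_sum]

/-- The cyclic shift `R_l` of the coordinates of a vector. -/
def cyclicShift (l : Fin L) (x : Fin L → ℝ) : Fin L → ℝ :=
  fun j => x (j + l)

@[fun_prop]
lemma measurable_cyclicShift {α : Type*} [MeasurableSpace α] {l : α → Fin L} {f : α → Fin L → ℝ}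
    (hl : Measurable l) (hf : Measurable f) : Measurable fun x => cyclicShift (l x) (f x) := by
  have h : Measurable fun q : (Fin L → ℝ) × Fin L => cyclicShift q.2 q.1 :=
    measurable_from_prod_countable_left fun l => by
      unfold cyclicShift
      fun_prop
  exact h.comp (hf.prodMk hl)

lemma lintegral_mraJoint1 (σ : ℝ) {F : (Fin L → ℝ) × (Fin L → ℝ) → ℝ≥0∞} (hF : Measurable F) :
    ∫⁻ p, F p ∂mraJoint1 L σ = ∑ l, (L : ℝ≥0∞)⁻¹ *
      ∫⁻ x, ∫⁻ z, F (x, cyclicShift l x + σ • z) ∂gaussianPi (Fin L) ∂gaussianPi (Fin L) := by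
  have hmeas : Measurable fun ω : (Fin L → ℝ) × Fin L × (Fin L → ℝ) =>
      (ω.1, cyclicShift ω.2.1 ω.1 + σ • ω.2.2) := by fun_prop
  have hlaw : mraJoint1 L σ =
      ((gaussianPi (Fin L)).prod ((unifFin L).prod (gaussianPi (Fin L)))).map
        fun ω => (ω.1, cyclicShift ω.2.1 ω.1 + σ • ω.2.2) := rfl
  have : SFinite (unifFin L) := by unfold unifFin; infer_instance
  have hinner (x : Fin L → ℝ) :
      ∫⁻ q, F (x, cyclicShift q.1 x + σ • q.2) ∂(unifFin L).prod (gaussianPi (Fin L))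
        = ∑ l, (L : ℝ≥0∞)⁻¹ * ∫⁻ z, F (x, cyclicShift l x + σ • z) ∂gaussianPi (Fin L) := by
    rw [lintegral_prod _ (by fun_prop), lintegral_unifFin]
  rw [hlaw, lintegral_map hF hmeas, lintegral_prod _ (by fun_prop)]
  simp_rw [hinner]
  rw [lintegral_finsetSum _ (by fun_prop)]
  exact Finset.sum_congr rfl fun l _ => lintegral_const_mul _ (by fun_prop)

/-- The density of the law of `(X, σ⁻¹ Y)` with respect to `N(0, I) ⊗ N(0, I)`: given `X = x`, the
vector `σ⁻¹ Y` is a uniform mixture of the laws `N(σ⁻¹ R_l x, I)`. -/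
noncomputable def mraDensity (L : ℕ) (σ : ℝ) (p : (Fin L → ℝ) × (Fin L → ℝ)) : ℝ≥0∞ :=
  ∑ l, (L : ℝ≥0∞)⁻¹ * cameronMartin (σ⁻¹ • cyclicShift l p.1) p.2

lemma measurable_mraDensity (σ : ℝ) : Measurable (mraDensity L σ) := by
  unfold mraDensity
  fun_prop

lemma mraJoint1_eq_map_withDensity {σ : ℝ} (hσ : σ ≠ 0) :
    mraJoint1 L σ =
      (((gaussianPi (Fin L)).prod (gaussianPi (Fin L))).withDensity (mraDensity L σ)).map
        (Prod.map id (σ • ·)) := by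
  refine Measure.ext_of_lintegral _ fun F hF => ?_
  have htranslate (l : Fin L) (x : Fin L → ℝ) :
      ∫⁻ z, F (x, cyclicShift l x + σ • z) ∂gaussianPi (Fin L)
        = ∫⁻ z, cameronMartin (σ⁻¹ • cyclicShift l x) z * F (x, σ • z) ∂gaussianPi (Fin L) := by
    have h := lintegral_const_add_gaussianPi (σ⁻¹ • cyclicShift l x)
      (F := fun z => F (x, σ • z)) (by fun_prop)
    simpa only [smul_add, smul_inv_smul₀ hσ] using h
  calc ∫⁻ p, F p ∂mraJoint1 L σ
      = ∑ l, (L : ℝ≥0∞)⁻¹ * ∫⁻ p, cameronMartin (σ⁻¹ • cyclicShift l p.1) p.2 * F (p.1, σ • p.2)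
          ∂(gaussianPi (Fin L)).prod (gaussianPi (Fin L)) := by
        rw [lintegral_mraJoint1 σ hF]
        simp_rw [htranslate]
        refine Finset.sum_congr rfl fun l _ => ?_
        rw [lintegral_prod _ (by fun_prop)]
    _ = ∫⁻ p, mraDensity L σ p * F (p.1, σ • p.2)
          ∂(gaussianPi (Fin L)).prod (gaussianPi (Fin L)) := by
        simp_rw [mraDensity, Finset.sum_mul, mul_assoc]
        rw [lintegral_finsetSum _ (by fun_prop)]
        exact Finset.sum_congr rfl fun l _ => (lintegral_const_mul _ (by fun_prop)).symm
    _ = _ := by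
        rw [lintegral_map hF (by fun_prop),
          lintegral_withDensity_eq_lintegral_mul _ (measurable_mraDensity σ) (by fun_prop)]
        rfl

variable [NeZero L]

lemma ncard_fixedPoints_addRight (a : Fin L) :
    (Function.fixedPoints (Equiv.addRight a)).ncard = if a = 0 then L else 0 := by
  split_ifs with ha
  · simp [Function.fixedPoints, Function.IsFixedPt, ha]
  · simp [Function.fixedPoints, Function.IsFixedPt, ha]

lemma cyclicShift_dotProduct_cyclicShift (l k : Fin L) (x : Fin L → ℝ) :
    cyclicShift l x ⬝ᵥ cyclicShift k x = ∑ i, x i * x (Equiv.addRight (k - l) i) := by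
  rw [← Equiv.sum_comp (Equiv.addRight l)]
  simp [cyclicShift, dotProduct]

lemma lintegral_exp_cyclicShift_dotProduct_le (l k : Fin L) {t : ℝ} (ht : 16 * t ^ 2 * L ≤ 1) :
    ∫⁻ x, ENNReal.ofReal (Real.exp (t * (cyclicShift l x ⬝ᵥ cyclicShift k x))) ∂gaussianPi (Fin L)
      ≤ ENNReal.ofReal (Real.exp (t * (if l = k then L else 0) + 2 * t ^ 2 * L)) := by
  have h := lintegral_exp_sum_mul_perm_gaussianPi_le (Equiv.addRight (k - l)) (t := t) (by simpa)
  rw [ncard_fixedPoints_addRight, Fintype.card_fin] at h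
  simpa only [cyclicShift_dotProduct_cyclicShift, sub_eq_zero, eq_comm, Nat.cast_ite,
    Nat.cast_zero] using h

lemma lintegral_exp_cyclicShift_dotProduct_le_two_mul_exp {s t : ℝ} (l k : Fin L)
    (ht : 16 * t ^ 2 * L ≤ 1) (hts : t * (if l = k then L else 0) ≤ s) :
    ∫⁻ x, ENNReal.ofReal (Real.exp (t * (cyclicShift l x ⬝ᵥ cyclicShift k x))) ∂gaussianPi (Fin L)
      ≤ ENNReal.ofReal (2 * Real.exp s) := by
  refine (lintegral_exp_cyclicShift_dotProduct_le l k ht).trans (ENNReal.ofReal_le_ofReal ?_)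
  rw [Real.exp_add, mul_comm]
  gcongr
  rw [← Real.le_log_iff_exp_le two_pos]
  linarith [Real.log_two_gt_d9]

variable {σ θ : ℝ}

lemma lintegral_cameronMartin_mul_cameronMartin_le {l k : Fin L} (hlk : l ≠ k)
    (hσ : 16 * (σ ^ 2)⁻¹ ^ 2 * L ≤ 1) :
    ∫⁻ p, cameronMartin (σ⁻¹ • cyclicShift l p.1) p.2 * cameronMartin (σ⁻¹ • cyclicShift k p.1) p.2
      ∂(gaussianPi (Fin L)).prod (gaussianPi (Fin L)) ≤ ENNReal.ofReal 2 := by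
  rw [lintegral_prod _ (by fun_prop)]
  simp only [lintegral_cameronMartin_mul, smul_dotProduct, dotProduct_smul, smul_eq_mul,
    ← mul_assoc, ← sq, inv_pow]
  simpa using lintegral_exp_cyclicShift_dotProduct_le_two_mul_exp (s := 0) l k hσ (by simp [hlk])

lemma lintegral_cameronMartin_rpow_one_add_le (l : Fin L) (h0 : 0 ≤ θ) (h1 : θ ≤ 1)
    (hσ : 16 * (σ ^ 2)⁻¹ ^ 2 * L ≤ 1) (hsnr : (σ ^ 2)⁻¹ * L ≤ 2 * Real.log L) :
    ∫⁻ p, cameronMartin (σ⁻¹ • cyclicShift l p.1) p.2 ^ (1 + θ)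
      ∂(gaussianPi (Fin L)).prod (gaussianPi (Fin L))
      ≤ ENNReal.ofReal (2 * Real.exp ((θ + θ ^ 2) * Real.log L)) := by
  set q := (θ + θ ^ 2) / 2 with hq
  have hq0 : 0 ≤ q := by positivity
  have hq1 : q ≤ 1 := by nlinarith
  rw [lintegral_prod _ (by fun_prop)]
  have hexp : ((1 + θ) ^ 2 - (1 + θ)) / 2 = q := by ring
  simp only [lintegral_cameronMartin_rpow _ (by positivity : 0 ≤ 1 + θ), hexp, smul_dotProduct,
    dotProduct_smul, smul_eq_mul, ← mul_assoc σ⁻¹, ← sq, inv_pow, ← mul_assoc q]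
  refine lintegral_exp_cyclicShift_dotProduct_le_two_mul_exp l l ?_ ?_
  · calc 16 * (q * (σ ^ 2)⁻¹) ^ 2 * L = q ^ 2 * (16 * (σ ^ 2)⁻¹ ^ 2 * L) := by ring
      _ ≤ 1 * 1 := by gcongr; exact pow_le_one₀ hq0 hq1
      _ = 1 := one_mul 1
  · calc q * (σ ^ 2)⁻¹ * (if l = l then L else 0) = q * ((σ ^ 2)⁻¹ * L) := by simp [mul_assoc]
      _ ≤ q * (2 * Real.log L) := by gcongr
      _ = (θ + θ ^ 2) * Real.log L := by ring

lemma lintegral_mraDensity_rpow_one_add_le (h0 : 0 ≤ θ) (h1 : θ ≤ 1)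
    (hσ : 16 * (σ ^ 2)⁻¹ ^ 2 * L ≤ 1) (hsnr : (σ ^ 2)⁻¹ * L ≤ 2 * Real.log L) :
    ∫⁻ p, mraDensity L σ p ^ (1 + θ) ∂(gaussianPi (Fin L)).prod (gaussianPi (Fin L))
      ≤ ENNReal.ofReal (5 * Real.exp (θ ^ 2 * Real.log L)) := by
  have hL : (0 : ℝ) < L := Nat.cast_pos.2 (NeZero.pos L)
  have : 0 ≤ Real.log L := Real.log_natCast_nonneg L
  have hone (l : Fin L) : ∫⁻ p, cameronMartin (σ⁻¹ • cyclicShift l p.1) p.2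
      ∂(gaussianPi (Fin L)).prod (gaussianPi (Fin L)) = 1 := by
    rw [lintegral_prod _ (by fun_prop)]
    simp [lintegral_cameronMartin]
  have hmix := lintegral_average_rpow_one_add_le (by fun_prop) h0 h1 hone
    (fun l => lintegral_cameronMartin_rpow_one_add_le l h0 h1 hσ hsnr)
    (fun l k hlk => lintegral_cameronMartin_mul_cameronMartin_le hlk hσ)
  have hcancel : (L : ℝ≥0∞)⁻¹ ^ θ * ENNReal.ofReal (2 * Real.exp ((θ + θ ^ 2) * Real.log L))
      = ENNReal.ofReal (2 * Real.exp (θ ^ 2 * Real.log L)) := by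
    rw [← ENNReal.ofReal_natCast, ← ENNReal.ofReal_inv_of_pos hL,
      ENNReal.ofReal_rpow_of_nonneg (by positivity) h0, ← ENNReal.ofReal_mul (by positivity),
      Real.inv_rpow hL.le, ← Real.rpow_neg hL.le, Real.rpow_def_of_pos hL, mul_left_comm,
      ← Real.exp_add]
    ring_nf
  rw [Fintype.card_fin, hcancel] at hmix
  refine hmix.trans ?_
  rw [← ENNReal.ofReal_one, ← ENNReal.ofReal_add (by positivity) zero_le_one,
    ← ENNReal.ofReal_add (by positivity) zero_le_two]
  gcongr
  linarith [Real.one_le_exp (by positivity : 0 ≤ θ ^ 2 * Real.log L)]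

instance isProbabilityMeasure_unifFin : IsProbabilityMeasure (unifFin L) := ⟨by
  simpa [unifFin] using ENNReal.inv_mul_cancel (by simpa using NeZero.ne L) (by simp)⟩

instance isProbabilityMeasure_mraJoint1 : IsProbabilityMeasure (mraJoint1 L σ) := ⟨by
  rw [← lintegral_one, lintegral_mraJoint1 σ measurable_const]
  simpa using ENNReal.mul_inv_cancel (by simpa using NeZero.ne L) (by simp)⟩

lemma klDiv_mraJoint1_le (hσ0 : σ ≠ 0) (h0 : 0 < θ) (h1 : θ ≤ 1)
    (hσ : 16 * (σ ^ 2)⁻¹ ^ 2 * L ≤ 1) (hsnr : (σ ^ 2)⁻¹ * L ≤ 2 * Real.log L) :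
    klDiv (mraJoint1 L σ) ((gaussianPi (Fin L)).prod ((gaussianPi (Fin L)).map (σ • ·)))
      ≤ ENNReal.ofReal (θ⁻¹ * Real.log 5 + θ * Real.log L) := by
  set G := (gaussianPi (Fin L)).prod (gaussianPi (Fin L)) with hG
  have hscale : Measurable (Prod.map id (σ • ·) : (Fin L → ℝ) × (Fin L → ℝ) → _) := by fun_prop
  have hjoint : mraJoint1 L σ = (G.withDensity (mraDensity L σ)).map (Prod.map id (σ • ·)) :=
    mraJoint1_eq_map_withDensity hσ0
  have hprod : (gaussianPi (Fin L)).prod ((gaussianPi (Fin L)).map (σ • ·))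
      = G.map (Prod.map id (σ • ·)) := by
    rw [hG, ← Measure.map_prod_map _ _ measurable_id (by fun_prop), Measure.map_id]
  have : IsProbabilityMeasure (G.withDensity (mraDensity L σ)) := by
    rw [← Measure.isProbabilityMeasure_map_iff hscale.aemeasurable, ← hjoint]
    infer_instance
  have hlog : θ⁻¹ * Real.log (5 * Real.exp (θ ^ 2 * Real.log L))
      = θ⁻¹ * Real.log 5 + θ * Real.log L := by
    rw [Real.log_mul (by norm_num) (Real.exp_pos _).ne', Real.log_exp]
    field_simp
  rw [hjoint, hprod, ← hlog]
  refine (klDiv_map_le _ _ hscale).trans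
    (klDiv_le_of_lintegral_rnDeriv_rpow_le (withDensity_absolutelyContinuous _ _) h0
      (by positivity) ?_)
  refine (lintegral_congr_ae ?_).trans_le (lintegral_mraDensity_rpow_one_add_le h0.le h1 hσ hsnr)
  filter_upwards [Measure.rnDeriv_withDensity G (measurable_mraDensity σ)] with p hp
  rw [hp]

lemma mutualInfo_mraJoint1_mem_Icc (hσ0 : σ ≠ 0) (hσ : 16 * (σ ^ 2)⁻¹ ^ 2 * L ≤ 1)
    (hsnr : (σ ^ 2)⁻¹ * L ≤ 2 * Real.log L) (hlog : 1 ≤ Real.log L) :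
    mutualInfo (mraJoint1 L σ) ∈ Set.Icc 0 (5 * √(Real.log L)) := by
  have hsqrt : 1 ≤ √(Real.log L) := Real.one_le_sqrt.2 hlog
  have : IsProbabilityMeasure ((gaussianPi (Fin L)).map (σ • ·)) :=
    Measure.isProbabilityMeasure_map (by fun_prop)
  refine mutualInfo_mem_Icc (by positivity) ((klDiv_mraJoint1_le (θ := (√(Real.log L))⁻¹) hσ0
    (by positivity) (inv_le_one_of_one_le₀ hsqrt) hσ hsnr).trans (ENNReal.ofReal_le_ofReal ?_))
  have hlog5 : Real.log 5 ≤ 4 := by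
    linarith [Real.log_le_sub_one_of_pos (by norm_num : (0 : ℝ) < 5)]
  calc (√(Real.log L))⁻¹⁻¹ * Real.log 5 + (√(Real.log L))⁻¹ * Real.log L
      = √(Real.log L) * Real.log 5 + √(Real.log L) := by
        rw [inv_inv, inv_mul_eq_div, Real.div_sqrt]
    _ ≤ √(Real.log L) * 4 + √(Real.log L) := by gcongr
    _ = 5 * √(Real.log L) := by ring

end MRA

lemma tendsto_log_natCast_atTop : Tendsto (fun n : ℕ => Real.log n) atTop atTop :=
  Real.tendsto_log_atTop.comp tendsto_natCast_atTop_atTop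

lemma inv_sigmaAlpha_sq (L : ℕ) {α : ℝ} (hα : 0 ≤ α) :
    (sigmaAlpha L α ^ 2)⁻¹ = α * Real.log L / L := by
  have := Real.log_natCast_nonneg L
  rw [sigmaAlpha, Real.sq_sqrt (by positivity), inv_div]

lemma eventually_mul_inv_sigmaAlpha_sq_le_one {α : ℝ} (hα : 0 ≤ α) :
    ∀ᶠ L : ℕ in atTop, 16 * (sigmaAlpha L α ^ 2)⁻¹ ^ 2 * L ≤ 1 := by
  have hlittle : Tendsto (fun L : ℕ => Real.log L ^ 2 / L) atTop (nhds 0) :=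
    (Real.isLittleO_pow_log_id_atTop (n := 2)).tendsto_div_nhds_zero.comp
      tendsto_natCast_atTop_atTop
  have hlim := hlittle.const_mul (16 * α ^ 2)
  rw [mul_zero] at hlim
  filter_upwards [hlim.eventually_le_const one_pos, eventually_gt_atTop 0] with L hL hL0
  refine le_of_eq_of_le ?_ hL
  rw [inv_sigmaAlpha_sq L hα]
  field_simp

lemma eventually_mutualInfo_mraJoint1_mem_Icc {α : ℝ} (hα0 : 0 < α) (hα : α ≤ 2) :
    ∀ᶠ L : ℕ in atTop,
      mutualInfo (mraJoint1 L (sigmaAlpha L α)) ∈ Set.Icc 0 (5 * √(Real.log L)) := by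
  filter_upwards [eventually_mul_inv_sigmaAlpha_sq_le_one hα0.le,
    tendsto_log_natCast_atTop.eventually_ge_atTop 1, eventually_gt_atTop 0] with L hσ hlog hL
  have : NeZero L := ⟨hL.ne'⟩
  have hsnr : (sigmaAlpha L α ^ 2)⁻¹ * L = α * Real.log L := by
    rw [inv_sigmaAlpha_sq L hα0.le]
    field_simp
  have hσ0 : sigmaAlpha L α ≠ 0 := (Real.sqrt_pos.2 (by positivity)).ne'
  exact mutualInfo_mraJoint1_mem_Icc hσ0 hσ (by rw [hsnr]; gcongr) hlog

/-- mutual information at low SNR. With `σ² = L/(α log L)` and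
`0 < α ≤ 2` fixed, `I(X;Y) = o(log L)`, i.e. `I(X;Y)/log L → 0`. -/
theorem mutual_info_low_snr (α : ℝ) (hα0 : 0 < α) (hα : α ≤ 2) :
    Tendsto (fun L : ℕ => mutualInfo (mraJoint1 L (sigmaAlpha L α)) / Real.log L)
      atTop (nhds 0) := by
  have hbound := eventually_mutualInfo_mraJoint1_mem_Icc hα0 hα
  have hlim : Tendsto (fun L : ℕ => 5 / √(Real.log L)) atTop (nhds 0) :=
    (Real.tendsto_sqrt_atTop.comp tendsto_log_natCast_atTop).const_div_atTop 5
  refine squeeze_zero' (hbound.mono fun L h => div_nonneg h.1 (Real.log_natCast_nonneg L))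
    (hbound.mono fun L h => ?_) hlim
  calc mutualInfo (mraJoint1 L (sigmaAlpha L α)) / Real.log L
      ≤ 5 * √(Real.log L) / Real.log L :=
        div_le_div_of_nonneg_right h.2 (Real.log_natCast_nonneg L)
    _ = 5 / √(Real.log L) := by rw [mul_div_assoc, Real.sqrt_div_self, div_eq_mul_inv]

end MRAformal
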